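/- Let q = 3 and let c ∈ [3] be an arbitrary colour. When d = 2, for every β ∈ (0,1) there exists n₀ such that for all n ≥ n₀ and all boundary configurations τ:Λ_{2,n}→[3], 459/2000 ≤ Pr_{𝕋_{2,n}}[σ(v_{2,n}) = c ∣ σ(Λ_{2,n}) = τ] ≤ 1107/2500. When d ≥ 3, for every β ∈ [1 − 3/(d+1), 1), there exist sequences {L_n} and {U_n} (depending on d and β) and n₀ such that for all n ≥ n₀ and all τ:Λ_{d,n}→[3], L_n ≤ Pr_{𝕋_{d,n}}[σ(v_{d,n}) = c ∣ σ(Λ_{d,n}) = τ] ≤ U_n and U_n/L_n ≤ 53/27. -/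

import Mathlib

open Filter

/-- Weight of a configuration of the `q`-state Potts model with parameter `β`
on the `d`-ary tree of height `n`.  A vertex of the tree is a pair of a depth
`k ≤ n` and a path of length `k`; the parent of a vertex of depth `k+1` is
obtained by dropping the last step of its path.  The weight is
`β ^ (number of monochromatic edges)`. -/
noncomputable def treeWeight (q d n : ℕ) (β : ℝ)
    (σ : (Σ k : Fin (n + 1), (Fin k → Fin d)) → Fin q) : ℝ :=
  β ^ (Finset.univ.filter (fun p : Σ k : Fin n, (Fin (k + 1) → Fin d) =>
        σ ⟨p.1.succ, p.2⟩ = σ ⟨p.1.castSucc, fun i => p.2 i.castSucc⟩)).card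

/-- The conditional probability, under the Gibbs distribution of the `q`-state
Potts model with parameter `β` on the `d`-ary tree `𝕋_{d,n}` of height `n`,
that the root receives colour `c` given that the leaves (the depth-`n`
vertices) are coloured according to `τ`. -/
noncomputable def condRootProb (q d n : ℕ) (β : ℝ)
    (τ : (Fin n → Fin d) → Fin q) (c : Fin q) : ℝ :=
  (∑ σ ∈ Finset.univ.filter
      (fun σ : (Σ k : Fin (n + 1), (Fin k → Fin d)) → Fin q =>
        σ ⟨⟨0, n.succ_pos⟩, Fin.elim0⟩ = c ∧
          ∀ f : Fin n → Fin d, σ ⟨⟨n, n.lt_succ_self⟩, f⟩ = τ f),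
      treeWeight q d n β σ) /
  (∑ σ ∈ Finset.univ.filter
      (fun σ : (Σ k : Fin (n + 1), (Fin k → Fin d)) → Fin q =>
        ∀ f : Fin n → Fin d, σ ⟨⟨n, n.lt_succ_self⟩, f⟩ = τ f),
      treeWeight q d n β σ)

/-- `γ(q,β,d,n)`: the maximum, over boundary configurations `τ` and colours
`c₁, c₂`, of the ratio of conditional root marginals. -/
noncomputable def pottsGamma (q d : ℕ) (β : ℝ) (n : ℕ) : ℝ :=
  ⨆ τ : (Fin n → Fin d) → Fin q, ⨆ c₁ : Fin q, ⨆ c₂ : Fin q,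
    condRootProb q d n β τ c₁ / condRootProb q d n β τ c₂

/-- The function `g_{c₁,c₂,β}` of the two-step recursion. -/
noncomputable def gfun (q d : ℕ) (β : ℝ) (c₁ c₂ : Fin q) (p : Fin d → Fin q → ℝ) : ℝ :=
  ∏ k : Fin d,
    (1 - ((1 - β) * (p k c₁ - p k c₂)) /
      (β * p k c₂ + ∑ c ∈ Finset.univ.erase c₂, p k c))

/-- The function `h_{c₁,c₂,β}` of the two-step recursion. -/
noncomputable def hfun (q d : ℕ) (β : ℝ) (c₁ c₂ : Fin q) (p : Fin d → Fin q → ℝ) : ℝ :=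
  1 + ((1 - β) * (1 - gfun q d β c₁ c₂ p)) /
    (β + ∑ c ∈ Finset.univ.erase c₂, gfun q d β c c₂ p)

/-- `Δ_α`: probability vectors on `q` colours whose entries are within a
factor `α` of each other. -/
def simplexAlpha (q : ℕ) (α : ℝ) : Set (Fin q → ℝ) :=
  {p | (∀ i, 0 ≤ p i) ∧ (∑ i, p i) = 1 ∧ ∀ i j, p i ≤ α * p j}

/-- `M_{α,c₁,c₂,β}`: the maximum of `h_{c₁,c₂,β}` over `Δ_α^d`. -/
noncomputable def Mval (q d : ℕ) (α β : ℝ) (c₁ c₂ : Fin q) : ℝ :=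
  sSup ((hfun q d β c₁ c₂) '' {p | ∀ k, p k ∈ simplexAlpha q α})

/-- `Ex_c(α)`: vectors with entries in `{1, α}`, whose `c`-entry is `1`
and with at least one entry equal to `α`. -/
def exSet (q : ℕ) (c : Fin q) (α : ℝ) : Set (Fin q → ℝ) :=
  {p | (∀ c', p c' = 1 ∨ p c' = α) ∧ p c = 1 ∧ ∃ c', p c' = α}

/-- The function `f_u(d,β,x,y)` from the one-step analysis. -/
noncomputable def fU (d : ℕ) (β x y : ℝ) : ℝ :=
  (1 - (1 - β) * y) ^ d /
    ((1 - (1 - β) * y) ^ d +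
      2 * (1 - (1 - β) * x) ^ ((d : ℝ) / 2) *
        (1 - (1 - β) * (1 - x - y)) ^ ((d : ℝ) / 2))

/-- The function `f_ℓ(d,β,x,y)` from the one-step analysis. -/
noncomputable def fL (d : ℕ) (β x y : ℝ) : ℝ :=
  (1 - (1 - β) * x) ^ d /
    ((1 - (1 - β) * x) ^ d + (1 - (1 - β) * y) ^ d +
      (1 - (1 - β) * (1 - x - y)) ^ d)

/-- The pair of sequences `(u_n(d,β), ℓ_n(d,β))`, defined by
`u_0 = 1`, `ℓ_0 = 0`, `u_{n+1} = f_u(d,β,u_n,ℓ_n)`, `ℓ_{n+1} = f_ℓ(d,β,u_n,ℓ_n)`. -/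
noncomputable def ulSeq (d : ℕ) (β : ℝ) : ℕ → ℝ × ℝ
  | 0 => (1, 0)
  | n + 1 =>
      (fU d β (ulSeq d β n).1 (ulSeq d β n).2,
       fL d β (ulSeq d β n).1 (ulSeq d β n).2)

/-- The weight of an edge whose endpoints have colours `a` and `b`. -/
noncomputable def edgeWeight {q : ℕ} (β : ℝ) (a b : Fin q) : ℝ := if a = b then β else 1

lemma treeWeight_eq_prod (q d n : ℕ) (β : ℝ)
    (σ : (Σ k : Fin (n + 1), (Fin k → Fin d)) → Fin q) :
    treeWeight q d n β σ = ∏ k : Fin n, ∏ f : Fin (k + 1) → Fin d,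
      edgeWeight β (σ ⟨k.succ, f⟩) (σ ⟨k.castSucc, fun i => f i.castSucc⟩) := by
  unfold treeWeight edgeWeight
  rw [← Fintype.prod_sigma', Finset.prod_ite]
  simp

/-- A configuration on the tree of height `n + 1` is a colour of the root together with a
configuration on each of the `d` subtrees of height `n`. -/
def configEquiv (q d n : ℕ) :
    ((Σ k : Fin (n + 1 + 1), (Fin k → Fin d)) → Fin q) ≃
      Fin q × (Fin d → ((Σ k : Fin (n + 1), (Fin k → Fin d)) → Fin q)) where
  toFun σ := (σ ⟨0, Fin.elim0⟩, fun i v => σ ⟨v.1.succ, Fin.cons i v.2⟩)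
  invFun x v := Fin.cases (motive := fun k => (Fin k → Fin d) → Fin q) (fun _ => x.1)
    (fun j (f : Fin (j + 1) → Fin d) => x.2 (f 0) ⟨j, Fin.tail f⟩) v.1 v.2
  left_inv σ := by
    funext ⟨k, f⟩
    induction k using Fin.cases with
    | zero =>
      obtain rfl : f = Fin.elim0 := funext fun i : Fin 0 => i.elim0
      rfl
    | succ j =>
      exact congrArg (fun g : Fin (j + 1) → Fin d => σ ⟨j.succ, g⟩)
        (Fin.cons_self_tail (α := fun _ => Fin d) f)
  right_inv x := by
    refine Prod.ext rfl ?_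
    funext i ⟨k, f⟩
    rfl

lemma treeWeight_succ (q d n : ℕ) (β : ℝ)
    (σ : (Σ k : Fin (n + 1 + 1), (Fin k → Fin d)) → Fin q) :
    treeWeight q d (n + 1) β σ = ∏ i : Fin d,
      (edgeWeight β ((configEquiv q d n σ).2 i ⟨0, Fin.elim0⟩) (configEquiv q d n σ).1 *
        treeWeight q d n β ((configEquiv q d n σ).2 i)) := by
  simp only [treeWeight_eq_prod]
  rw [Fin.prod_univ_succ, Finset.prod_mul_distrib, Finset.prod_comm]
  congr 1
  · refine Fintype.prod_equiv (Equiv.funUnique (Fin 1) (Fin d)) _ _ fun f => ?_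
    have h1 : f = Fin.cons (f 0) Fin.elim0 := by
      funext i
      fin_cases i
      rfl
    have h2 : (fun i : Fin 0 => f i.castSucc) = Fin.elim0 := Subsingleton.elim _ _
    change edgeWeight β (σ ⟨Fin.succ 0, f⟩) (σ ⟨0, fun i : Fin 0 => f i.castSucc⟩) =
      edgeWeight β (σ ⟨Fin.succ 0, Fin.cons (f 0) Fin.elim0⟩) (σ ⟨0, Fin.elim0⟩)
    rw [h2]
    exact congrArg (fun g : Fin 1 → Fin d => edgeWeight β (σ ⟨Fin.succ 0, g⟩) _) h1
  · refine Finset.prod_congr rfl fun k _ => ?_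
    rw [← Fintype.prod_prod_type']
    refine (Fintype.prod_equiv (Fin.consEquiv (n := k + 1) fun _ => Fin d) _ _ fun x => ?_).symm
    change edgeWeight β (σ ⟨k.succ.succ, Fin.cons x.1 x.2⟩) (σ ⟨k.castSucc.succ,
      (Fin.cons x.1 fun i : Fin k => x.2 i.castSucc : Fin (k + 1) → Fin d)⟩) =
      edgeWeight β (σ ⟨k.succ.succ, Fin.cons x.1 x.2⟩)
      (σ ⟨k.castSucc.succ, fun i : Fin (k + 1) =>
        (Fin.cons x.1 x.2 : Fin (k + 1 + 1) → Fin d) i.castSucc⟩)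
    have : (fun i : Fin (k + 1) => (Fin.cons x.1 x.2 : Fin (k + 1 + 1) → Fin d) i.castSucc) =
        Fin.cons x.1 (fun i : Fin k => x.2 i.castSucc) := by
      funext i
      induction i using Fin.cases with
      | zero => rfl
      | succ j => rfl
    exact congrArg (fun g : Fin (k + 1) → Fin d => edgeWeight β _ (σ ⟨k.castSucc.succ, g⟩))
      this.symm

/-- The partition function of the tree of height `n` with leaves coloured by `τ` and root
coloured `c`. -/
noncomputable def rootPartition (q d n : ℕ) (β : ℝ) (τ : (Fin n → Fin d) → Fin q)
    (c : Fin q) : ℝ :=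
  ∑ σ ∈ Finset.univ.filter
      (fun σ : (Σ k : Fin (n + 1), (Fin k → Fin d)) → Fin q =>
        σ ⟨⟨0, n.succ_pos⟩, Fin.elim0⟩ = c ∧
          ∀ f : Fin n → Fin d, σ ⟨⟨n, n.lt_succ_self⟩, f⟩ = τ f),
      treeWeight q d n β σ

lemma condRootProb_eq (q d n : ℕ) (β : ℝ) (τ : (Fin n → Fin d) → Fin q) (c : Fin q) :
    condRootProb q d n β τ c =
      rootPartition q d n β τ c / ∑ c', rootPartition q d n β τ c' := by
  unfold condRootProb
  congr 1
  rw [← Finset.sum_fiberwise _ (fun σ => σ ⟨⟨0, n.succ_pos⟩, Fin.elim0⟩)]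
  refine Finset.sum_congr rfl fun c' _ => ?_
  unfold rootPartition
  rw [Finset.filter_filter]
  simp only [and_comm]

lemma rootPartition_zero (q d : ℕ) (β : ℝ) (τ : (Fin 0 → Fin d) → Fin q) (c : Fin q) :
    rootPartition q d 0 β τ c = if τ Fin.elim0 = c then 1 else 0 := by
  have key : ∀ σ : (Σ k : Fin (0 + 1), (Fin k → Fin d)) → Fin q,
      (σ ⟨⟨0, Nat.succ_pos 0⟩, Fin.elim0⟩ = c ∧
        ∀ f : Fin 0 → Fin d, σ ⟨⟨0, Nat.lt_succ_self 0⟩, f⟩ = τ f) ↔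
      (τ Fin.elim0 = c ∧ σ = fun _ => c) := by
    intro σ
    constructor
    · rintro ⟨h1, h2⟩
      refine ⟨by rw [← h2, h1], ?_⟩
      funext ⟨k, f⟩
      induction k using Fin.cases with
      | zero =>
        obtain rfl : f = Fin.elim0 := funext fun i : Fin 0 => i.elim0
        exact h1
      | succ j => exact j.elim0
    · rintro ⟨h1, rfl⟩
      refine ⟨rfl, fun f => ?_⟩
      have : f = Fin.elim0 := Subsingleton.elim _ _
      subst this
      exact h1.symm
  unfold rootPartition
  simp only [key]
  split_ifs with h
  · simp [h, Finset.filter_eq', treeWeight_eq_prod]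
  · simp [h]

lemma rootPartition_succ (q d n : ℕ) (β : ℝ) (τ : (Fin (n + 1) → Fin d) → Fin q) (c : Fin q) :
    rootPartition q d (n + 1) β τ c = ∏ i : Fin d, ∑ c',
      edgeWeight β c' c * rootPartition q d n β (fun f => τ (Fin.cons i f)) c' := by
  have inner : ∀ i : Fin d,
      ∑ c', edgeWeight β c' c * rootPartition q d n β (fun f => τ (Fin.cons i f)) c' =
      ∑ ρ ∈ Finset.univ.filter (fun ρ : (Σ k : Fin (n + 1), (Fin k → Fin d)) → Fin q =>
        ∀ f : Fin n → Fin d, ρ ⟨⟨n, n.lt_succ_self⟩, f⟩ = τ (Fin.cons i f)),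
        edgeWeight β (ρ ⟨0, Fin.elim0⟩) c * treeWeight q d n β ρ := by
    intro i
    rw [← Finset.sum_fiberwise _
      (fun ρ : (Σ k : Fin (n + 1), (Fin k → Fin d)) → Fin q => ρ ⟨0, Fin.elim0⟩)]
    refine Finset.sum_congr rfl fun c' _ => ?_
    unfold rootPartition
    rw [Finset.filter_filter, Finset.mul_sum]
    refine Finset.sum_congr (Finset.filter_congr fun ρ _ => and_comm) fun ρ hρ => ?_
    rw [(Finset.mem_filter.1 hρ).2.2]
  simp only [inner]
  rw [Finset.prod_univ_sum]
  unfold rootPartition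
  refine Finset.sum_bij' (fun σ _ => (configEquiv q d n σ).2)
    (fun ρ _ => (configEquiv q d n).symm (c, ρ)) ?_ ?_ ?_ ?_ ?_
  · intro σ hσ
    simp only [Fintype.mem_piFinset, Finset.mem_filter, Finset.mem_univ, true_and] at hσ ⊢
    exact fun i f => hσ.2 (Fin.cons i f)
  · intro ρ hρ
    simp only [Fintype.mem_piFinset, Finset.mem_filter, Finset.mem_univ, true_and] at hρ ⊢
    refine ⟨rfl, fun f => ?_⟩
    refine Eq.trans ?_ ((hρ (f 0) (Fin.tail f)).trans ?_)
    · rfl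
    · rw [Fin.cons_self_tail]
  · intro σ hσ
    simp only [Finset.mem_filter, Finset.mem_univ, true_and] at hσ
    rw [Equiv.symm_apply_eq]
    exact Prod.ext hσ.1.symm rfl
  · intro ρ _
    simp
  · intro σ hσ
    simp only [Finset.mem_filter, Finset.mem_univ, true_and] at hσ
    rw [treeWeight_succ, show (configEquiv q d n σ).1 = c from hσ.1]

/-- One step of the tree recursion for the `3`-state Potts model with `t = 1 - β`: the root
marginals as a function of the marginals at the children. -/
noncomputable def pottsStep {d : ℕ} (t : ℝ) (f : Fin d → Fin 3 → ℝ) (c : Fin 3) : ℝ :=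
  (∏ k, (1 - t * f k c)) / ∑ c', ∏ k, (1 - t * f k c')

/-- The marginals that can be obtained by `n` steps of the tree recursion, starting from
arbitrary probability vectors. -/
def reachable (d : ℕ) (t : ℝ) : ℕ → Set (Fin 3 → ℝ)
  | 0 => stdSimplex ℝ (Fin 3)
  | n + 1 => {p | ∃ f : Fin d → Fin 3 → ℝ, (∀ k, f k ∈ reachable d t n) ∧ p = pottsStep t f}

lemma one_sub_mul_pos {t p : ℝ} (ht0 : 0 < t) (ht1 : t < 1) (hp : p ≤ 1) : 0 < 1 - t * p := by
  nlinarith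

lemma le_one_of_mem_stdSimplex {p : Fin 3 → ℝ} (hp : p ∈ stdSimplex ℝ (Fin 3)) (c : Fin 3) :
    p c ≤ 1 :=
  hp.2 ▸ Finset.single_le_sum (fun i _ => hp.1 i) (Finset.mem_univ c)

lemma pottsStep_mem_stdSimplex {d : ℕ} {t : ℝ} (ht0 : 0 < t) (ht1 : t < 1)
    {f : Fin d → Fin 3 → ℝ} (hf : ∀ k, f k ∈ stdSimplex ℝ (Fin 3)) :
    pottsStep t f ∈ stdSimplex ℝ (Fin 3) := by
  have hpos : ∀ c, 0 < ∏ k, (1 - t * f k c) := fun c => Finset.prod_pos fun k _ =>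
    one_sub_mul_pos ht0 ht1 (le_one_of_mem_stdSimplex (hf k) c)
  have hsum : 0 < ∑ c, ∏ k, (1 - t * f k c) :=
    Finset.sum_pos (fun c _ => hpos c) Finset.univ_nonempty
  refine ⟨fun c => (div_pos (hpos c) hsum).le, ?_⟩
  simp only [pottsStep]
  rw [← Finset.sum_div, div_self hsum.ne']

lemma reachable_subset_stdSimplex (d : ℕ) {t : ℝ} (ht0 : 0 < t) (ht1 : t < 1) (n : ℕ) :
    reachable d t n ⊆ stdSimplex ℝ (Fin 3) := by
  induction n with
  | zero => exact subset_rfl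
  | succ n ih =>
    rintro _ ⟨f, hf, rfl⟩
    exact pottsStep_mem_stdSimplex ht0 ht1 fun k => ih (hf k)

lemma reachable_antitone (d : ℕ) {t : ℝ} (ht0 : 0 < t) (ht1 : t < 1) :
    Antitone (reachable d t) := by
  refine antitone_nat_of_succ_le fun n => ?_
  induction n with
  | zero => exact reachable_subset_stdSimplex d ht0 ht1 1
  | succ n ih =>
    rintro _ ⟨f, hf, rfl⟩
    exact ⟨f, fun k => ih (hf k), rfl⟩

lemma reachable_nonempty (d : ℕ) (t : ℝ) (n : ℕ) : (reachable d t n).Nonempty := by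
  induction n with
  | zero => exact ⟨_, single_mem_stdSimplex ℝ 0⟩
  | succ n ih =>
    obtain ⟨p, hp⟩ := ih
    exact ⟨_, fun _ => p, fun _ => hp, rfl⟩

lemma sum_edgeWeight_mul {β : ℝ} (z : Fin 3 → ℝ) (c : Fin 3) (hz : ∑ c', z c' ≠ 0) :
    ∑ c', edgeWeight β c' c * z c' =
      (∑ c', z c') * (1 - (1 - β) * (z c / ∑ c', z c')) := by
  have h : ∀ c', edgeWeight β c' c * z c' = z c' - (1 - β) * (if c' = c then z c' else 0) := by
    intro c'
    unfold edgeWeight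
    split_ifs <;> ring
  simp only [h, Finset.sum_sub_distrib, ← Finset.mul_sum, Finset.sum_ite_eq', Finset.mem_univ,
    if_true]
  field_simp

lemma condRootProb_mem_reachable (d : ℕ) {β : ℝ} (hβ0 : 0 < β) (hβ1 : β < 1) (n : ℕ)
    (τ : (Fin n → Fin d) → Fin 3) :
    condRootProb 3 d n β τ ∈ reachable d (1 - β) n ∧ 0 < ∑ c, rootPartition 3 d n β τ c := by
  have ht0 : 0 < 1 - β := by linarith
  have ht1 : 1 - β < 1 := by linarith
  induction n with
  | zero =>
    have : condRootProb 3 d 0 β τ = Pi.single (τ Fin.elim0) 1 := by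
      funext c
      rw [condRootProb_eq]
      simp [rootPartition_zero, Pi.single_apply, eq_comm]
    rw [this]
    exact ⟨single_mem_stdSimplex ℝ _, by simp [rootPartition_zero]⟩
  | succ n ih =>
    have hZ : ∀ c, rootPartition 3 d (n + 1) β τ c =
        (∏ k, ∑ c', rootPartition 3 d n β (fun f => τ (Fin.cons k f)) c') *
          ∏ k, (1 - (1 - β) * condRootProb 3 d n β (fun f => τ (Fin.cons k f)) c) := by
      intro c
      rw [rootPartition_succ, ← Finset.prod_mul_distrib]
      refine Finset.prod_congr rfl fun k _ => ?_
      rw [sum_edgeWeight_mul _ _ (ih _).2.ne', condRootProb_eq]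
    have hW : 0 < ∏ k, ∑ c', rootPartition 3 d n β (fun f => τ (Fin.cons k f)) c' :=
      Finset.prod_pos fun k _ => (ih _).2
    constructor
    · refine ⟨fun k => condRootProb 3 d n β fun f => τ (Fin.cons k f), fun k => (ih _).1, ?_⟩
      funext c
      rw [condRootProb_eq]
      simp only [hZ, ← Finset.mul_sum]
      rw [mul_div_mul_left _ _ hW.ne']
      rfl
    · refine Finset.sum_pos (fun c _ => ?_) Finset.univ_nonempty
      rw [hZ]
      refine mul_pos hW (Finset.prod_pos fun k _ => one_sub_mul_pos ht0 ht1 ?_)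
      exact le_one_of_mem_stdSimplex (reachable_subset_stdSimplex d ht0 ht1 n (ih _).1) c

/-- The sum of the colour classes other than `c`, written with two explicit colours. -/
lemma exists_other_colours (c : Fin 3) :
    ∃ a b : Fin 3, ∀ z : Fin 3 → ℝ, ∑ i, z i = z c + z a + z b := by
  fin_cases c
  · exact ⟨1, 2, fun z => by simp [Fin.sum_univ_three]⟩
  · exact ⟨0, 2, fun z => by simp [Fin.sum_univ_three]; ring⟩
  · exact ⟨0, 1, fun z => by simp [Fin.sum_univ_three]; ring⟩

lemma upper_factor_le {t l u a b e : ℝ} (ht0 : 0 < t) (ht1 : t < 1) (hu : u ≤ 1)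
    (ha : l ≤ a) (hau : a ≤ u) (hbu : b ≤ u) (heu : e ≤ u)
    (hsum : a + b + e = 1) (hlu : 1 ≤ 2 * u + l) :
    (1 - t * u) * (1 - t * (1 - u - l)) * (1 - t * a) ^ 2 ≤
      (1 - t * b) * (1 - t * e) * (1 - t * l) ^ 2 := by
  obtain ⟨b', e', hb, he, hb'u, he'u, hs⟩ :
      ∃ b' e', b ≤ b' ∧ e ≤ e' ∧ b' ≤ u ∧ e' ≤ u ∧ l + b' + e' = 1 := by
    rcases le_total (b + (a - l)) u with h | h
    · exact ⟨b + (a - l), e, by linarith, le_rfl, h, heu, by linarith⟩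
    · exact ⟨u, 1 - l - u, hbu, by linarith, le_rfl, by linarith, by ring⟩
  have hpos : ∀ z, z ≤ u → 0 < 1 - t * z := fun z hz =>
    one_sub_mul_pos ht0 ht1 (hz.trans hu)
  have h1 : (1 - t * u) * (1 - t * (1 - u - l)) ≤ (1 - t * b') * (1 - t * e') := by
    obtain rfl : e' = 1 - l - b' := by linarith
    nlinarith [mul_nonneg (sq_nonneg t) (mul_nonneg (sub_nonneg.2 hb'u) (sub_nonneg.2 he'u))]
  have h2 : (1 - t * b') * (1 - t * e') ≤ (1 - t * b) * (1 - t * e) := by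
    have := hpos b' hb'u
    have := hpos e' he'u
    have := hpos b hbu
    gcongr
  have h3 : (1 - t * a) ^ 2 ≤ (1 - t * l) ^ 2 := by
    have := hpos a hau
    gcongr
  have h4 : 0 ≤ (1 - t * b) * (1 - t * e) := (mul_pos (hpos b hbu) (hpos e heu)).le
  exact mul_le_mul (h1.trans h2) h3 (sq_nonneg _) h4

lemma prod_add_prod_le_pow_add_pow {ι : Type*} (s : Finset ι) {r w : ι → ℝ} {R S : ℝ}
    (hr : ∀ i, 0 ≤ r i) (hw : ∀ i, 0 ≤ w i) (hrR : ∀ i, r i ≤ R) (hwR : ∀ i, w i ≤ R)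
    (hS : 0 ≤ S) (hSR : S ≤ R) (hrw : ∀ i, r i + w i ≤ R + S) :
    ∏ i ∈ s, r i + ∏ i ∈ s, w i ≤ R ^ s.card + S ^ s.card := by
  have key : ∀ {x y X Y M N : ℝ}, x ≤ R → x + y ≤ R + S → 0 ≤ Y → Y ≤ X → X ≤ M →
      X + Y ≤ M + N → x * X + y * Y ≤ R * M + S * N := by
    intro x y X Y M N hx hxy hY hYX hXM hXY
    nlinarith [mul_nonneg (sub_nonneg.2 hx) (sub_nonneg.2 hYX),
      mul_nonneg (sub_nonneg.2 hxy) hY, mul_nonneg hS (sub_nonneg.2 hXY),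
      mul_nonneg (sub_nonneg.2 hSR) (sub_nonneg.2 hXM)]
  classical
  induction s using Finset.induction_on with
  | empty => simp
  | insert a s ha ih =>
    rw [Finset.prod_insert ha, Finset.prod_insert ha, Finset.card_insert_of_notMem ha, pow_succ',
      pow_succ']
    have h1 : 0 ≤ ∏ i ∈ s, r i := Finset.prod_nonneg fun i _ => hr i
    have h2 : 0 ≤ ∏ i ∈ s, w i := Finset.prod_nonneg fun i _ => hw i
    have h3 : ∏ i ∈ s, r i ≤ R ^ s.card :=
      (Finset.prod_le_prod (fun i _ => hr i) fun i _ => hrR i).trans_eq (Finset.prod_const R)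
    have h4 : ∏ i ∈ s, w i ≤ R ^ s.card :=
      (Finset.prod_le_prod (fun i _ => hw i) fun i _ => hwR i).trans_eq (Finset.prod_const R)
    rcases le_total (∏ i ∈ s, w i) (∏ i ∈ s, r i) with h | h
    · exact key (hrR a) (hrw a) h2 h h3 ih
    · rw [add_comm]
      exact key (hwR a) (by linarith [hrw a]) h1 h h4 (by linarith)

lemma pottsStep_upper {d : ℕ} {t l u : ℝ} (ht0 : 0 < t) (ht1 : t < 1) (hu : u ≤ 1)
    (hlu : 1 ≤ 2 * u + l) {f : Fin d → Fin 3 → ℝ}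
    (hf : ∀ k, f k ∈ stdSimplex ℝ (Fin 3)) (hfl : ∀ k c, l ≤ f k c) (hfu : ∀ k c, f k c ≤ u)
    (c : Fin 3) :
    4 * pottsStep t f c ^ 2 * ((1 - t * u) * (1 - t * (1 - u - l))) ^ d ≤
      (1 - pottsStep t f c) ^ 2 * ((1 - t * l) ^ 2) ^ d := by
  obtain ⟨a, b, hab⟩ := exists_other_colours c
  have hpos : ∀ k c, 0 < 1 - t * f k c := fun k c =>
    one_sub_mul_pos ht0 ht1 ((hfu k c).trans hu)
  have hP : ∀ c, 0 < ∏ k, (1 - t * f k c) := fun c => Finset.prod_pos fun k _ => hpos k c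
  have hprod : ((1 - t * u) * (1 - t * (1 - u - l))) ^ d * (∏ k, (1 - t * f k c)) ^ 2 ≤
      (∏ k, (1 - t * f k a)) * (∏ k, (1 - t * f k b)) * ((1 - t * l) ^ 2) ^ d := by
    have h := Finset.prod_le_prod (s := (Finset.univ : Finset (Fin d)))
      (f := fun k => (1 - t * u) * (1 - t * (1 - u - l)) * (1 - t * f k c) ^ 2)
      (g := fun k => (1 - t * f k a) * (1 - t * f k b) * (1 - t * l) ^ 2)
      (fun k _ => mul_nonneg (mul_nonneg (one_sub_mul_pos ht0 ht1 hu).le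
        (one_sub_mul_pos ht0 ht1 (by linarith)).le) (sq_nonneg _))
      (fun k _ => upper_factor_le ht0 ht1 hu (hfl k c) (hfu k c) (hfu k a) (hfu k b)
        (by rw [← hab, (hf k).2]) hlu)
    simpa only [Finset.prod_mul_distrib, Finset.prod_const, Finset.prod_pow, Finset.card_univ,
      Fintype.card_fin, mul_pow] using h
  have hS := hab fun c => ∏ k, (1 - t * f k c)
  unfold pottsStep
  rw [hS]
  have hpc := hP c
  have hpa := hP a
  have hpb := hP b
  generalize ∏ k, (1 - t * f k c) = C at *
  generalize ∏ k, (1 - t * f k a) = A at *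
  generalize ∏ k, (1 - t * f k b) = B at *
  have hY : 0 ≤ ((1 - t * l) ^ 2) ^ d := by positivity
  have hne : C + A + B ≠ 0 := by positivity
  have h1 : 1 - C / (C + A + B) = (A + B) / (C + A + B) := by
    field_simp
    ring
  rw [h1, div_pow, div_pow, mul_div_assoc', div_mul_eq_mul_div, div_mul_eq_mul_div]
  refine div_le_div_of_nonneg_right ?_ (by positivity)
  nlinarith [mul_nonneg (sq_nonneg (A - B)) hY]

lemma pottsStep_lower {d : ℕ} {t l u : ℝ} (ht0 : 0 < t) (ht1 : t < 1) (hl : 0 ≤ l) (hu : u ≤ 1)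
    (hlu : 1 ≤ 2 * u + l) (hul : u + 2 * l ≤ 1) {f : Fin d → Fin 3 → ℝ}
    (hf : ∀ k, f k ∈ stdSimplex ℝ (Fin 3)) (hfl : ∀ k c, l ≤ f k c) (hfu : ∀ k c, f k c ≤ u)
    (c : Fin 3) :
    (1 - pottsStep t f c) * (1 - t * u) ^ d ≤
      pottsStep t f c * ((1 - t * l) ^ d + (1 - t * (1 - u - l)) ^ d) := by
  obtain ⟨a, b, hab⟩ := exists_other_colours c
  have hpos : ∀ k c, 0 < 1 - t * f k c := fun k c =>
    one_sub_mul_pos ht0 ht1 ((hfu k c).trans hu)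
  have hU : 0 < 1 - t * u := one_sub_mul_pos ht0 ht1 hu
  have hP : ∀ c, 0 < ∏ k, (1 - t * f k c) := fun c => Finset.prod_pos fun k _ => hpos k c
  have hR : ∀ k c', (1 - t * f k c') / (1 - t * f k c) ≤ (1 - t * l) / (1 - t * u) := by
    intro k c'
    rw [div_le_div_iff₀ (hpos k c) hU]
    have h1 := hfl k c'
    have h2 := hfu k c
    have : 0 ≤ 1 - t * l := (one_sub_mul_pos ht0 ht1 (by linarith)).le
    have : 0 ≤ 1 - t * u := hU.le
    gcongr
  have hprod := prod_add_prod_le_pow_add_pow (Finset.univ : Finset (Fin d))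
    (r := fun k => (1 - t * f k a) / (1 - t * f k c))
    (w := fun k => (1 - t * f k b) / (1 - t * f k c))
    (R := (1 - t * l) / (1 - t * u)) (S := (1 - t * (1 - u - l)) / (1 - t * u))
    (fun k => (div_pos (hpos k a) (hpos k c)).le) (fun k => (div_pos (hpos k b) (hpos k c)).le)
    (fun k => hR k a) (fun k => hR k b)
    (div_nonneg (one_sub_mul_pos ht0 ht1 (by linarith)).le hU.le)
    (by gcongr; linarith)
    (fun k => by
      have h1 : f k c + f k a + f k b = 1 := by rw [← hab, (hf k).2]
      have h2 := hfu k c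
      rw [← add_div, ← add_div, div_le_div_iff₀ (hpos k c) hU]
      obtain h3 : f k b = 1 - f k c - f k a := by linarith
      rw [h3]
      nlinarith [mul_nonneg ht0.le (sub_nonneg.2 h2)])
  simp only [Finset.prod_div_distrib, Finset.card_univ, Fintype.card_fin, div_pow] at hprod
  rw [← add_div, ← add_div, div_le_div_iff₀ (hP c) (pow_pos hU d)] at hprod
  have hS := hab fun c => ∏ k, (1 - t * f k c)
  unfold pottsStep
  rw [hS]
  have hpc := hP c
  have hpa := hP a
  have hpb := hP b
  generalize ∏ k, (1 - t * f k c) = C at *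
  generalize ∏ k, (1 - t * f k a) = A at *
  generalize ∏ k, (1 - t * f k b) = B at *
  have hne : C + A + B ≠ 0 := by positivity
  have h1 : 1 - C / (C + A + B) = (A + B) / (C + A + B) := by
    field_simp
    ring
  rw [h1, div_mul_eq_mul_div, div_mul_eq_mul_div]
  refine div_le_div_of_nonneg_right ?_ (by positivity)
  linarith

/-- The properties of the limiting lower and upper bounds `l`, `u` on root marginals. -/
structure IsLimitBox (d : ℕ) (t l u : ℝ) : Prop where
  nonneg : 0 ≤ l
  le_one : u ≤ 1
  one_le : 1 ≤ 2 * u + l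
  le_one' : u + 2 * l ≤ 1
  upper : 4 * u ^ 2 * ((1 - t * u) * (1 - t * (1 - u - l))) ^ d ≤
    (1 - u) ^ 2 * ((1 - t * l) ^ 2) ^ d
  lower : (1 - l) * (1 - t * u) ^ d ≤ l * ((1 - t * l) ^ d + (1 - t * (1 - u - l)) ^ d)

lemma exists_isLimitBox (d : ℕ) {t : ℝ} (ht0 : 0 < t) (ht1 : t < 1) :
    ∃ l u, IsLimitBox d t l u ∧ ∀ ε > 0, ∃ n₀, ∀ n ≥ n₀, ∀ p ∈ reachable d t n, ∀ c,
      l - ε ≤ p c ∧ p c ≤ u + ε := by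
  set S : ℕ → Set ℝ := fun n => {x | ∃ p ∈ reachable d t n, ∃ c, p c = x} with hS
  have hmem : ∀ {n p} (c : Fin 3), p ∈ reachable d t n → p c ∈ S n :=
    fun c hp => ⟨_, hp, c, rfl⟩
  have hsimp := reachable_subset_stdSimplex d ht0 ht1
  have hne : ∀ n, (S n).Nonempty := fun n =>
    let ⟨p, hp⟩ := reachable_nonempty d t n
    ⟨p 0, hmem 0 hp⟩
  have hSanti : Antitone S := by
    rintro m n hmn _ ⟨p, hp, c, rfl⟩
    exact hmem c (reachable_antitone d ht0 ht1 hmn hp)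
  have h0 : ∀ n, ∀ x ∈ S n, 0 ≤ x := by
    rintro n _ ⟨p, hp, c, rfl⟩
    exact (hsimp n hp).1 c
  have h1 : ∀ n, ∀ x ∈ S n, x ≤ 1 := by
    rintro n _ ⟨p, hp, c, rfl⟩
    exact le_one_of_mem_stdSimplex (hsimp n hp) c
  have hbb : ∀ n, BddBelow (S n) := fun n => ⟨0, fun x hx => h0 n x hx⟩
  have hba : ∀ n, BddAbove (S n) := fun n => ⟨1, fun x hx => h1 n x hx⟩
  set U : ℕ → ℝ := fun n => sSup (S n) with hU
  set L : ℕ → ℝ := fun n => sInf (S n) with hL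
  have hUle : ∀ n, ∀ x ∈ S n, x ≤ U n := fun n x hx => le_csSup (hba n) hx
  have hLle : ∀ n, ∀ x ∈ S n, L n ≤ x := fun n x hx => csInf_le (hbb n) hx
  have hL0 : ∀ n, 0 ≤ L n := fun n => le_csInf (hne n) (h0 n)
  have hU1 : ∀ n, U n ≤ 1 := fun n => csSup_le (hne n) (h1 n)
  have hLU : ∀ n, L n ≤ U n := fun n =>
    let ⟨x, hx⟩ := hne n
    (hLle n x hx).trans (hUle n x hx)
  have hone : ∀ n, 1 ≤ 2 * U n + L n := by
    intro n
    suffices 1 - 2 * U n ≤ L n by linarith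
    refine le_csInf (hne n) ?_
    rintro _ ⟨p, hp, c, rfl⟩
    obtain ⟨a, b, hab⟩ := exists_other_colours c
    have := hab p
    rw [(hsimp n hp).2] at this
    linarith [hUle n _ (hmem a hp), hUle n _ (hmem b hp)]
  have hone' : ∀ n, U n + 2 * L n ≤ 1 := by
    intro n
    suffices U n ≤ 1 - 2 * L n by linarith
    refine csSup_le (hne n) ?_
    rintro _ ⟨p, hp, c, rfl⟩
    obtain ⟨a, b, hab⟩ := exists_other_colours c
    have := hab p
    rw [(hsimp n hp).2] at this
    linarith [hLle n _ (hmem a hp), hLle n _ (hmem b hp)]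
  have hUanti : Antitone U := fun m n hmn => csSup_le_csSup (hba m) (hne n) (hSanti hmn)
  have hLmono : Monotone L := fun m n hmn => csInf_le_csInf (hbb m) (hne n) (hSanti hmn)
  obtain ⟨u, hu⟩ : ∃ u, Tendsto U atTop (nhds u) :=
    ⟨_, tendsto_atTop_ciInf hUanti ⟨0, by rintro _ ⟨n, rfl⟩; exact (hL0 n).trans (hLU n)⟩⟩
  obtain ⟨l, hl⟩ : ∃ l, Tendsto L atTop (nhds l) :=
    ⟨_, tendsto_atTop_ciSup hLmono ⟨1, by rintro _ ⟨n, rfl⟩; exact (hLU n).trans (hU1 n)⟩⟩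
  have hupper : ∀ n, 4 * U (n + 1) ^ 2 * ((1 - t * U n) * (1 - t * (1 - U n - L n))) ^ d ≤
      (1 - U (n + 1)) ^ 2 * ((1 - t * L n) ^ 2) ^ d := by
    intro n
    have hcl : IsClosed {x : ℝ | 4 * x ^ 2 * ((1 - t * U n) * (1 - t * (1 - U n - L n))) ^ d ≤
        (1 - x) ^ 2 * ((1 - t * L n) ^ 2) ^ d} := isClosed_le (by fun_prop) (by fun_prop)
    refine closure_minimal ?_ hcl (csSup_mem_closure (hne (n + 1)) (hba (n + 1)))
    rintro _ ⟨_, ⟨f, hf, rfl⟩, c, rfl⟩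
    exact pottsStep_upper ht0 ht1 (hU1 n) (hone n) (fun k => hsimp n (hf k))
      (fun k c => hLle n _ (hmem c (hf k))) (fun k c => hUle n _ (hmem c (hf k))) c
  have hlower : ∀ n, (1 - L (n + 1)) * (1 - t * U n) ^ d ≤
      L (n + 1) * ((1 - t * L n) ^ d + (1 - t * (1 - U n - L n)) ^ d) := by
    intro n
    have hcl : IsClosed {x : ℝ | (1 - x) * (1 - t * U n) ^ d ≤
        x * ((1 - t * L n) ^ d + (1 - t * (1 - U n - L n)) ^ d)} :=
      isClosed_le (by fun_prop) (by fun_prop)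
    refine closure_minimal ?_ hcl (csInf_mem_closure (hne (n + 1)) (hbb (n + 1)))
    rintro _ ⟨_, ⟨f, hf, rfl⟩, c, rfl⟩
    exact pottsStep_lower ht0 ht1 (hL0 n) (hU1 n) (hone n) (hone' n) (fun k => hsimp n (hf k))
      (fun k c => hLle n _ (hmem c (hf k))) (fun k c => hUle n _ (hmem c (hf k))) c
  have hu' : Tendsto (fun n => U (n + 1)) atTop (nhds u) := hu.comp (tendsto_add_atTop_nat 1)
  have hl' : Tendsto (fun n => L (n + 1)) atTop (nhds l) := hl.comp (tendsto_add_atTop_nat 1)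
  have hc {a : ℝ} : Tendsto (fun _ : ℕ => a) atTop (nhds a) := tendsto_const_nhds
  refine ⟨l, u, ⟨?_, ?_, ?_, ?_, ?_, ?_⟩, ?_⟩
  · exact ge_of_tendsto' hl hL0
  · exact le_of_tendsto' hu hU1
  · exact ge_of_tendsto' ((hu.const_mul 2).add hl) hone
  · exact le_of_tendsto' (hu.add (hl.const_mul 2)) hone'
  · exact le_of_tendsto_of_tendsto'
      (((hu'.pow 2).const_mul 4).mul (((hc.sub (hu.const_mul t)).mul
        (hc.sub (((hc.sub hu).sub hl).const_mul t))).pow d))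
      (((hc.sub hu').pow 2).mul (((hc.sub (hl.const_mul t)).pow 2).pow d)) hupper
  · exact le_of_tendsto_of_tendsto'
      ((hc.sub hl').mul ((hc.sub (hu.const_mul t)).pow d))
      (hl'.mul (((hc.sub (hl.const_mul t)).pow d).add
        ((hc.sub (((hc.sub hu).sub hl).const_mul t)).pow d))) hlower
  · intro ε hε
    obtain ⟨n₀, hn₀⟩ := eventually_atTop.1
      ((hu.eventually_lt_const (show u < u + ε by linarith)).and
      (hl.eventually_const_lt (show l - ε < l by linarith)))
    refine ⟨n₀, fun n hn p hp c => ⟨?_, ?_⟩⟩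
    · exact (hn₀ n hn).2.le.trans (hLle n _ (hmem c hp))
    · exact (hUle n _ (hmem c hp)).trans (hn₀ n hn).1.le

lemma IsLimitBox.lower_le_upper {d : ℕ} {t l u : ℝ} (h : IsLimitBox d t l u) : l ≤ u := by
  linarith [h.one_le, h.le_one']

/-- The constraints on a limit box become weaker when `t` increases. -/
lemma IsLimitBox.mono {d : ℕ} {t s l u : ℝ} (h : IsLimitBox d t l u) (ht0 : 0 < t) (ht1 : t < 1)
    (hts : t ≤ s) (hs : s ≤ 1) : IsLimitBox d s l u := by
  obtain ⟨hl, hu, h1, h2, hup, hlo⟩ := h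
  have hU : 0 < 1 - t * u := one_sub_mul_pos ht0 ht1 hu
  have hL : 0 < 1 - t * l := one_sub_mul_pos ht0 ht1 (by linarith)
  have hE : 0 < 1 - t * (1 - u - l) := one_sub_mul_pos ht0 ht1 (by linarith)
  have hs0 : ∀ p : ℝ, 0 ≤ p → p ≤ 1 → 0 ≤ 1 - s * p := fun p hp hp1 => by nlinarith
  have hU' := hs0 u (by linarith) hu
  have hL' := hs0 l hl (by linarith)
  have hE' := hs0 (1 - u - l) (by linarith) (by linarith)
  have key : ∀ {p r : ℝ}, p ≤ r → (1 - s * r) * (1 - t * p) ≤ (1 - s * p) * (1 - t * r) :=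
    fun {p r} hpr => by nlinarith [mul_nonneg (sub_nonneg.2 hts) (sub_nonneg.2 hpr)]
  refine ⟨hl, hu, h1, h2, ?_, ?_⟩
  · have hmul : ((1 - s * u) * (1 - s * (1 - u - l))) ^ d * ((1 - t * l) ^ 2) ^ d ≤
        ((1 - s * l) ^ 2) ^ d * ((1 - t * u) * (1 - t * (1 - u - l))) ^ d := by
      rw [← mul_pow, ← mul_pow]
      refine pow_le_pow_left₀ (by positivity) ?_ d
      have := mul_le_mul (key (p := l) (r := u) (by linarith))
        (key (p := l) (r := 1 - u - l) (by linarith)) (by positivity) (by positivity)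
      linarith
    refine le_of_mul_le_mul_right ?_ (pow_pos (pow_pos hL 2) d)
    calc _ = 4 * u ^ 2 *
          (((1 - s * u) * (1 - s * (1 - u - l))) ^ d * ((1 - t * l) ^ 2) ^ d) := by ring
      _ ≤ 4 * u ^ 2 *
          (((1 - s * l) ^ 2) ^ d * ((1 - t * u) * (1 - t * (1 - u - l))) ^ d) := by gcongr
      _ = 4 * u ^ 2 * ((1 - t * u) * (1 - t * (1 - u - l))) ^ d * ((1 - s * l) ^ 2) ^ d := by ring
      _ ≤ (1 - u) ^ 2 * ((1 - t * l) ^ 2) ^ d * ((1 - s * l) ^ 2) ^ d := by gcongr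
      _ = _ := by ring
  · have hpow : ∀ {p : ℝ}, p ≤ u → 0 ≤ 1 - t * p →
        (1 - s * u) ^ d * (1 - t * p) ^ d ≤ (1 - s * p) ^ d * (1 - t * u) ^ d := by
      intro p hp hp'
      rw [← mul_pow, ← mul_pow]
      exact pow_le_pow_left₀ (by positivity) (key hp) d
    refine le_of_mul_le_mul_right ?_ (pow_pos hU d)
    have h3 := hpow (p := l) (by linarith) hL.le
    have h4 := hpow (p := 1 - u - l) (by linarith) hE.le
    calc _ = (1 - l) * (1 - t * u) ^ d * (1 - s * u) ^ d := by ring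
      _ ≤ l * ((1 - t * l) ^ d + (1 - t * (1 - u - l)) ^ d) * (1 - s * u) ^ d := by gcongr
      _ = l * ((1 - s * u) ^ d * (1 - t * l) ^ d +
          (1 - s * u) ^ d * (1 - t * (1 - u - l)) ^ d) := by ring
      _ ≤ l * ((1 - s * l) ^ d * (1 - t * u) ^ d +
          (1 - s * (1 - u - l)) ^ d * (1 - t * u) ^ d) := by gcongr
      _ = _ := by ring

lemma IsLimitBox.upper_lt_one {d : ℕ} {t l u : ℝ} (h : IsLimitBox d t l u) (ht0 : 0 < t)
    (ht1 : t < 1) : u < 1 := by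
  refine lt_of_le_of_ne h.le_one ?_
  rintro rfl
  have h1 : 0 < 1 - t * 1 := one_sub_mul_pos ht0 ht1 le_rfl
  have h2 : 0 < 1 - t * (1 - 1 - l) := one_sub_mul_pos ht0 ht1 (by linarith [h.nonneg])
  have h3 := pow_pos (mul_pos h1 h2) d
  have := h.upper
  norm_num at this h3
  linarith

lemma upper_two_neg {s x : ℝ} (hs : 0 ≤ s) (hs' : s ≤ 1 / 3 - 623 / 6000)
    (hx : 435 / 4000 + 28 / 25 * s + 3 / 10 * s ^ 2 ≤ x) :
    (623 / 6000 + s) - x + (623 / 6000 + s) ^ 2 / 2 - x ^ 2 + x * (623 / 6000 + s) < 0 := by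
  have h0 := sub_nonneg.2 hs'
  have hmono : ∀ z, z ≤ x → 0 ≤ z → (623 / 6000 + s) - x - x ^ 2 + x * (623 / 6000 + s) ≤
      (623 / 6000 + s) - z - z ^ 2 + z * (623 / 6000 + s) := fun z hz hz0 => by
    nlinarith [mul_nonneg (sub_nonneg.2 hz) (show 0 ≤ 1 + x + z - (623 / 6000 + s) by linarith)]
  have := hmono _ hx (by positivity)
  nlinarith [mul_nonneg hs h0, mul_nonneg (pow_nonneg hs 2) h0, mul_nonneg (pow_nonneg hs 3) h0,
    pow_nonneg hs 2]

lemma lower_two_neg {s : ℝ} (hs : 0 ≤ s) (hs' : s ≤ 1 / 3 - 623 / 6000) :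
    (459 / 2000 - s) * ((1 - (459 / 2000 - s)) ^ 2 +
      ((1 / 3 + (435 / 4000 + 28 / 25 * s + 3 / 10 * s ^ 2)) + (459 / 2000 - s)) ^ 2) <
    (1 - (459 / 2000 - s)) * (1 - (1 / 3 + (435 / 4000 + 28 / 25 * s + 3 / 10 * s ^ 2))) ^ 2 := by
  have h0 := sub_nonneg.2 hs'
  nlinarith [pow_nonneg h0 5, mul_nonneg hs (pow_nonneg h0 4),
    mul_nonneg (pow_nonneg hs 2) (pow_nonneg h0 3), mul_nonneg (pow_nonneg hs 3) (pow_nonneg h0 2),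
    mul_nonneg (pow_nonneg hs 4) h0, pow_nonneg hs 5]

lemma IsLimitBox.bounds_two {l u : ℝ} (h : IsLimitBox 2 1 l u) (hu : u < 1) :
    459 / 2000 < l ∧ u < 1107 / 2500 := by
  obtain ⟨hl, -, h1, h2, hup, hlo⟩ := h
  have hA : 2 * u * (u + l) ≤ (1 - l) ^ 2 := by
    have hpos : 0 < (1 - u) ^ 2 := by nlinarith
    refine abs_le_of_sq_le_sq' (le_of_mul_le_mul_left ?_ hpos) (sq_nonneg _) |>.2
    linarith
  have hB : (1 - l) * (1 - u) ^ 2 ≤ l * ((1 - l) ^ 2 + (u + l) ^ 2) := by linarith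
  have hl' : 459 / 2000 < l := by
    by_contra! hle
    obtain ⟨s, rfl⟩ : ∃ s, l = 459 / 2000 - s := ⟨459 / 2000 - l, by ring⟩
    have hs : 0 ≤ s := by linarith
    have hs' : s ≤ 1 / 3 - 623 / 6000 := by linarith
    rcases le_total (435 / 4000 + 28 / 25 * s + 3 / 10 * s ^ 2) (u - 1 / 3) with hx | hx
    · linarith [upper_two_neg hs hs' hx]
    · have hx' : u ≤ 1 / 3 + (435 / 4000 + 28 / 25 * s + 3 / 10 * s ^ 2) := by linarith
      have hn := lower_two_neg hs hs'
      have hle1 : 1 / 3 + (435 / 4000 + 28 / 25 * s + 3 / 10 * s ^ 2) ≤ 1 := by nlinarith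
      have h3 := mul_le_mul_of_nonneg_left (pow_le_pow_left₀
        (by linarith : (0 : ℝ) ≤ u + (459 / 2000 - s)) (add_le_add_left hx' _) 2) hl
      have h4 := mul_le_mul_of_nonneg_left (pow_le_pow_left₀ (sub_nonneg.2 hle1)
        (sub_le_sub_left hx' 1) 2) (by linarith : (0 : ℝ) ≤ 1 - (459 / 2000 - s))
      linarith
  refine ⟨hl', ?_⟩
  by_contra! hge
  nlinarith [mul_nonneg (sub_nonneg.2 hge) (sub_nonneg.2 hl'.le)]

/-- The constraints of a limit box at the critical `t = 3 / (d + 1)`, centred at `1 / 3`. -/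
lemma IsLimitBox.centred {d : ℕ} (hd : 0 < d) {x y : ℝ}
    (h : IsLimitBox d (3 / (d + 1)) (1 / 3 - y) (1 / 3 + x)) :
    4 * (1 + 3 * x) ^ 2 * ((1 - 3 / d * x) * (1 - 3 / d * (y - x))) ^ d ≤
        (2 - 3 * x) ^ 2 * ((1 + 3 / d * y) ^ 2) ^ d ∧
      (2 + 3 * y) * (1 - 3 / d * x) ^ d ≤
        (1 - 3 * y) * ((1 + 3 / d * y) ^ d + (1 - 3 / d * (y - x)) ^ d) := by
  have hd' : (0 : ℝ) < d := by exact_mod_cast hd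
  have key : ∀ {p : ℝ} (z : ℝ), p = 1 / 3 + z →
      1 - 3 / ((d : ℝ) + 1) * p = d / (d + 1) * (1 - 3 / d * z) := by
    rintro _ z rfl
    field_simp
    ring
  have hr : (0 : ℝ) < d / (d + 1) := by positivity
  obtain ⟨-, -, -, -, hup, hlo⟩ := h
  rw [key x rfl, key (p := 1 / 3 - y) (-y) (by ring),
    key (p := 1 - (1 / 3 + x) - (1 / 3 - y)) (y - x) (by ring), mul_neg, sub_neg_eq_add] at hup hlo
  generalize (d : ℝ) / (d + 1) = r at *
  constructor
  · refine le_of_mul_le_mul_left ?_ (pow_pos (pow_pos hr 2) d)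
    calc _ = 9 * (4 * (1 / 3 + x) ^ 2 *
          (r * (1 - 3 / d * x) * (r * (1 - 3 / d * (y - x)))) ^ d) := by
          rw [show r * (1 - 3 / d * x) * (r * (1 - 3 / d * (y - x))) =
            r ^ 2 * ((1 - 3 / d * x) * (1 - 3 / d * (y - x))) by ring, mul_pow (r ^ 2)]
          ring
      _ ≤ 9 * ((1 - (1 / 3 + x)) ^ 2 * ((r * (1 + 3 / d * y)) ^ 2) ^ d) := by gcongr
      _ = _ := by
          rw [mul_pow r, mul_pow (r ^ 2)]
          ring
  · refine le_of_mul_le_mul_left ?_ (pow_pos hr d)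
    simp only [mul_pow] at hlo
    linarith

lemma upper_three_pos {x : ℝ} (ha : 0 ≤ x - 281 / 2500) (hb : 0 ≤ 2 / 3 - x) :
    (2 - 3 * x) ^ 2 * (1 + (39 / 5000 + 7 / 8 * x)) ^ 6 <
      4 * (1 + 3 * x) ^ 2 * ((1 - x) * (1 - (39 / 5000 + 7 / 8 * x - x))) ^ 3 := by
  nlinarith [pow_nonneg hb 8, mul_nonneg ha (pow_nonneg hb 7),
    mul_nonneg (pow_nonneg ha 2) (pow_nonneg hb 6),
    mul_nonneg (pow_nonneg ha 3) (pow_nonneg hb 5),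
    mul_nonneg (pow_nonneg ha 4) (pow_nonneg hb 4),
    mul_nonneg (pow_nonneg ha 5) (pow_nonneg hb 3),
    mul_nonneg (pow_nonneg ha 6) (pow_nonneg hb 2), mul_nonneg (pow_nonneg ha 7) hb,
    pow_nonneg ha 8]

lemma lower_three_pos {y : ℝ} (ha : 0 ≤ y - 531 / 5000) (hb : 0 ≤ 1 / 3 - y) :
    (1 - 3 * y) * ((1 + y) ^ 3 + (1 - (y - 8 / 7 * (y - 39 / 5000))) ^ 3) <
      (2 + 3 * y) * (1 - 8 / 7 * (y - 39 / 5000)) ^ 3 := by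
  nlinarith [pow_nonneg hb 4, mul_nonneg ha (pow_nonneg hb 3),
    mul_nonneg (pow_nonneg ha 2) (pow_nonneg hb 2), mul_nonneg (pow_nonneg ha 3) hb,
    pow_nonneg ha 4]

lemma exp_upper_pos {x : ℝ} (ha : 0 ≤ x - 113 / 1000) (hb : 0 ≤ 39 / 100 - x) :
    (2 - 3 * x) * Real.exp (9 / 2 * (49 / 5000 + 17 / 20 * x)) < 2 * (1 + 3 * x) := by
  set w := 9 / 4 * (49 / 5000 + 17 / 20 * x) with hw
  have hexp : Real.exp w ≤ 1 + w + w ^ 2 / 2 + w ^ 3 / 6 + 5 * w ^ 4 / 96 := by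
    have := Real.exp_bound' (x := w) (by linarith) (by linarith) (n := 4) (by norm_num)
    norm_num [Finset.sum_range_succ, Nat.factorial] at this
    linarith
  rw [show 9 / 2 * (49 / 5000 + 17 / 20 * x) = w + w by ring, Real.exp_add, ← sq]
  have h2 : (2 - 3 * x) * Real.exp w ^ 2 ≤
      (2 - 3 * x) * (1 + w + w ^ 2 / 2 + w ^ 3 / 6 + 5 * w ^ 4 / 96) ^ 2 :=
    mul_le_mul_of_nonneg_left (pow_le_pow_left₀ (Real.exp_pos w).le hexp 2) (by linarith)
  refine h2.trans_lt ?_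
  rw [hw]
  clear_value w
  clear hexp h2 hw
  nlinarith [pow_nonneg hb 9, mul_nonneg ha (pow_nonneg hb 8),
    mul_nonneg (pow_nonneg ha 2) (pow_nonneg hb 7),
    mul_nonneg (pow_nonneg ha 3) (pow_nonneg hb 6),
    mul_nonneg (pow_nonneg ha 4) (pow_nonneg hb 5),
    mul_nonneg (pow_nonneg ha 5) (pow_nonneg hb 4),
    mul_nonneg (pow_nonneg ha 6) (pow_nonneg hb 3),
    mul_nonneg (pow_nonneg ha 7) (pow_nonneg hb 2), mul_nonneg (pow_nonneg ha 8) hb,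
    pow_nonneg ha 9]

lemma upper_four_pos {x : ℝ} (ha : 0 ≤ x - 39 / 100) (hb : 0 ≤ 2 / 3 - x) :
    (2 - 3 * x) * (27183 / 10000) <
      2 * (1 + 3 * x) * ((1 - 3 / 4 * x) * (1 - 3 / 4 * (1 / 3 - x))) ^ 2 := by
  nlinarith [pow_nonneg hb 5, mul_nonneg ha (pow_nonneg hb 4),
    mul_nonneg (pow_nonneg ha 2) (pow_nonneg hb 3),
    mul_nonneg (pow_nonneg ha 3) (pow_nonneg hb 2), mul_nonneg (pow_nonneg ha 4) hb,
    pow_nonneg ha 5]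

lemma lower_four_pos {y : ℝ} (ha : 0 ≤ y - 1059 / 10000) (hb : 0 ≤ 1 / 3 - y) :
    (1 - 3 * y) * ((1 + 3 / 4 * y) ^ 4 + (1 + 3 / 4 * (20 / 17 * (y - 49 / 5000) - y)) ^ 4) <
      (2 + 3 * y) * (1 - 3 / 4 * (20 / 17 * (y - 49 / 5000))) ^ 4 := by
  nlinarith [pow_nonneg hb 5, mul_nonneg ha (pow_nonneg hb 4),
    mul_nonneg (pow_nonneg ha 2) (pow_nonneg hb 3),
    mul_nonneg (pow_nonneg ha 3) (pow_nonneg hb 2), mul_nonneg (pow_nonneg ha 4) hb,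
    pow_nonneg ha 5]

lemma one_add_sq_le_exp_mul {X Y : ℝ} (hY : 0 ≤ Y) (hY' : Y ≤ 257 / 1000) (hXY : Y ≤ X)
    (hX : X ≤ 23 / 20 * Y) : (1 + Y) ^ 2 ≤ Real.exp (3 * Y) * ((1 - X) * (1 - (Y - X))) := by
  have hexp := Real.sum_le_exp_of_nonneg (x := 3 * Y) (by positivity) 6
  norm_num [Finset.sum_range_succ, Nat.factorial] at hexp
  have hprod : 1 - Y - 69 / 400 * Y ^ 2 ≤ (1 - X) * (1 - (Y - X)) := by
    nlinarith [mul_nonneg (sub_nonneg.2 hX) (sub_nonneg.2 hXY), mul_nonneg (sub_nonneg.2 hX) hY]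
  have hpos : 0 ≤ 1 - Y - 69 / 400 * Y ^ 2 := by nlinarith
  refine le_trans ?_ (mul_le_mul hexp hprod hpos (Real.exp_pos _).le)
  have hb := sub_nonneg.2 hY'
  suffices 0 ≤ Y ^ 2 * (131 / 400 - 207 / 400 * Y - 1521 / 800 * Y ^ 2 - 3321 / 1600 * Y ^ 3 -
      3 * Y ^ 4) by
    nlinarith [this, pow_nonneg hY 6, pow_nonneg hY 7]
  refine mul_nonneg (sq_nonneg Y) ?_
  nlinarith [mul_nonneg hY hb, mul_nonneg (pow_nonneg hY 2) hb, mul_nonneg (pow_nonneg hY 3) hb]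

lemma one_add_pow_four_le {d : ℕ} (hd : 4 ≤ d) {a : ℝ} (ha : -1 ≤ a) :
    (1 + a) ^ 4 ≤ (1 + 4 / d * a) ^ d := by
  have hd' : (4 : ℝ) ≤ d := by exact_mod_cast hd
  have h1 := rpow_one_add_le_one_add_mul_self ha (p := 4 / d) (by positivity)
    ((div_le_one (by linarith)).2 hd')
  have h0 : 0 ≤ 1 + a := by linarith
  calc (1 + a) ^ 4 = ((1 + a) ^ ((4 : ℝ) / d)) ^ d := by
        rw [← Real.rpow_mul_natCast h0, div_mul_cancel₀ _ (by linarith)]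
        exact_mod_cast (Real.rpow_natCast (1 + a) 4).symm
    _ ≤ _ := pow_le_pow_left₀ (Real.rpow_nonneg h0 _) h1 d

lemma convexOn_log_sub_log {a b : ℝ} (ha : a < 1) (hab : |b| ≤ a) :
    ConvexOn ℝ (Set.Icc 0 1) fun p : ℝ => Real.log (1 + p * b) - Real.log (1 - p * a) := by
  obtain ⟨hb1, hb2⟩ := abs_le.1 hab
  have h1 : ∀ p ∈ Set.Icc (0 : ℝ) 1, 0 < 1 + p * b := fun p hp => by nlinarith [hp.1, hp.2]
  have h2 : ∀ p ∈ Set.Icc (0 : ℝ) 1, 0 < 1 - p * a := fun p hp => by nlinarith [hp.1, hp.2]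
  have hderiv : ∀ p ∈ Set.Icc (0 : ℝ) 1,
      HasDerivAt (fun p : ℝ => Real.log (1 + p * b) - Real.log (1 - p * a))
        ((a + b) / ((1 + p * b) * (1 - p * a))) p := by
    intro p hp
    have hp1 := (h1 p hp).ne'
    have hp2 := (h2 p hp).ne'
    have h3 := ((((hasDerivAt_id p).mul_const b).const_add 1).log hp1).sub
      ((((hasDerivAt_id p).mul_const a).const_sub 1).log hp2)
    refine h3.congr_deriv ?_
    simp only [id]
    rw [div_sub_div _ _ hp1 hp2]
    ring
  have hsub : interior (Set.Icc (0 : ℝ) 1) ⊆ Set.Icc 0 1 := interior_subset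
  refine MonotoneOn.convexOn_of_deriv (convex_Icc 0 1)
    (fun p hp => (hderiv p hp).continuousAt.continuousWithinAt)
    (fun p hp => (hderiv p (hsub hp)).differentiableAt.differentiableWithinAt) ?_
  intro p hp r hr hpr
  rw [(hderiv p (hsub hp)).deriv, (hderiv r (hsub hr)).deriv]
  refine div_le_div_of_nonneg_left (by linarith)
    (mul_pos (h1 r (hsub hr)) (h2 r (hsub hr))) ?_
  obtain ⟨hr0, hr1⟩ := hsub hr
  obtain ⟨hp0, hp1⟩ := hsub hp
  have h4 : b - a - (p + r) * (a * b) ≤ 0 := by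
    have : -(a * b) * (p + r) ≤ a - b := by
      rcases le_total 0 b with hb | hb
      · nlinarith [mul_nonneg (mul_nonneg (hb.trans hb2) hb) (add_nonneg hp0 hr0)]
      · have hn : 0 ≤ -(a * b) := by nlinarith
        nlinarith [mul_nonneg hn (show 0 ≤ 2 - (p + r) by linarith)]
    linarith
  nlinarith [mul_nonneg (sub_nonneg.2 hpr) (neg_nonneg.2 h4)]

lemma pow_ratio_le {d : ℕ} (hd : 4 ≤ d) {a b : ℝ} (ha : a < 1) (hab : |b| ≤ a) :
    (1 + 4 / d * b) ^ d * (1 - a) ^ 4 ≤ (1 + b) ^ 4 * (1 - 4 / d * a) ^ d := by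
  have hd' : (4 : ℝ) ≤ d := by exact_mod_cast hd
  obtain ⟨hb1, hb2⟩ := abs_le.1 hab
  have hp0 : (0 : ℝ) ≤ 4 / d := by positivity
  have hp1 : (4 : ℝ) / d ≤ 1 := (div_le_one (by linarith)).2 hd'
  have h := (convexOn_log_sub_log ha hab).2 (Set.left_mem_Icc.2 zero_le_one)
    (Set.right_mem_Icc.2 zero_le_one) (sub_nonneg.2 hp1) hp0 (by ring)
  have hdp : (d : ℝ) * (4 / d) = 4 := mul_div_cancel₀ _ (by linarith)
  simp only [smul_eq_mul, mul_zero, mul_one, zero_add, zero_mul, add_zero, sub_zero, Real.log_one,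
    one_mul] at h
  generalize (4 : ℝ) / d = p at *
  have h1 : 0 < 1 + p * b := by nlinarith
  have h2 : 0 < 1 - p * a := by nlinarith
  have h3 : 0 < 1 + b := by linarith
  have h4 : 0 < 1 - a := by linarith
  rw [← Real.log_le_log_iff (by positivity) (by positivity), Real.log_mul (by positivity)
    (by positivity), Real.log_mul (by positivity) (by positivity), Real.log_pow, Real.log_pow,
    Real.log_pow, Real.log_pow]
  have h5 := mul_le_mul_of_nonneg_left h (by linarith : (0 : ℝ) ≤ d)
  rw [← mul_assoc, hdp] at h5
  push_cast
  linarith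

lemma not_centred_three {x y : ℝ} (hx0 : 0 ≤ x) (hy0 : 0 ≤ y) (hx1 : x ≤ 2 / 3) (hy1 : y ≤ 1 / 3)
    (hge : 26 ≤ 81 * x + 159 * y)
    (hup : 4 * (1 + 3 * x) ^ 2 * ((1 - x) * (1 - (y - x))) ^ 3 ≤
      (2 - 3 * x) ^ 2 * ((1 + y) ^ 2) ^ 3)
    (hlo : (2 + 3 * y) * (1 - x) ^ 3 ≤ (1 - 3 * y) * ((1 + y) ^ 3 + (1 - (y - x)) ^ 3)) :
    False := by
  rcases le_total y (39 / 5000 + 7 / 8 * x) with hy | hy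
  · have hpos := upper_three_pos (x := x) (by linarith) (by linarith)
    have h3 : 4 * (1 + 3 * x) ^ 2 * ((1 - x) * (1 - (39 / 5000 + 7 / 8 * x - x))) ^ 3 ≤
        4 * (1 + 3 * x) ^ 2 * ((1 - x) * (1 - (y - x))) ^ 3 := by
      have : 0 ≤ 1 - x := by linarith
      have : 0 ≤ 1 - (39 / 5000 + 7 / 8 * x - x) := by linarith
      gcongr
    have h4 : (2 - 3 * x) ^ 2 * ((1 + y) ^ 2) ^ 3 ≤
        (2 - 3 * x) ^ 2 * (1 + (39 / 5000 + 7 / 8 * x)) ^ 6 := by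
      rw [← pow_mul]
      gcongr
    linarith
  · have hpos := lower_three_pos (y := y) (by linarith) (by linarith)
    have hx : x ≤ 8 / 7 * (y - 39 / 5000) := by linarith
    have h3 : (1 - 3 * y) * ((1 + y) ^ 3 + (1 - (y - x)) ^ 3) ≤
        (1 - 3 * y) * ((1 + y) ^ 3 + (1 - (y - 8 / 7 * (y - 39 / 5000))) ^ 3) := by
      have : 0 ≤ 1 - 3 * y := by linarith
      have : 0 ≤ 1 - (y - x) := by linarith
      gcongr
    have h4 : (2 + 3 * y) * (1 - 8 / 7 * (y - 39 / 5000)) ^ 3 ≤ (2 + 3 * y) * (1 - x) ^ 3 := by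
      have : 0 ≤ 1 - 8 / 7 * (y - 39 / 5000) := by linarith
      gcongr
    linarith

lemma lt_of_centred_upper {d : ℕ} (hd4 : 4 ≤ d) {x y : ℝ} (hx0 : 0 ≤ x) (hy0 : 0 ≤ y)
    (hx1 : x ≤ 2 / 3) (hy1 : y ≤ 1 / 3) (hge : 26 ≤ 81 * x + 159 * y)
    (hup : 4 * (1 + 3 * x) ^ 2 * ((1 - 3 / d * x) * (1 - 3 / d * (y - x))) ^ d ≤
      (2 - 3 * x) ^ 2 * ((1 + 3 / d * y) ^ 2) ^ d) :
    49 / 5000 + 17 / 20 * x < y := by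
  by_contra! hy
  have hd' : (4 : ℝ) ≤ d := by exact_mod_cast hd4
  have hs0 : (0 : ℝ) < 3 / d := by positivity
  have hs1 : (3 : ℝ) / d ≤ 3 / 4 := by gcongr
  have hs4 : ∀ z : ℝ, 3 / d * z = 4 / d * (3 / 4 * z) := fun z => by ring
  have hsd : (d : ℝ) * (3 / d) = 3 := mul_div_cancel₀ _ (by linarith)
  have hmono : ∀ z, y ≤ z → z ≤ x + 1 →
      4 * (1 + 3 * x) ^ 2 * ((1 - 3 / d * x) * (1 - 3 / d * (z - x))) ^ d ≤
        (2 - 3 * x) ^ 2 * ((1 + 3 / d * z) ^ 2) ^ d := by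
    intro z hz hzx
    have : 0 ≤ 1 - 3 / d * x := by nlinarith
    have : 0 ≤ 1 - 3 / d * (z - x) := by nlinarith
    refine le_trans ?_ (hup.trans ?_) <;> gcongr
  rcases le_total x (39 / 100) with hx | hx
  · have hpos := exp_upper_pos (x := x) (by linarith) (by linarith)
    have hA := hmono _ hy (by linarith)
    set z := 49 / 5000 + 17 / 20 * x with hz
    have hz0 : 0 ≤ z := by positivity
    have hV : 0 < (1 - 3 / d * x) * (1 - 3 / d * (z - x)) :=
      mul_pos (by nlinarith) (by nlinarith)
    have hexp := pow_le_pow_left₀ (by positivity)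
      (one_add_sq_le_exp_mul (X := 3 / d * x) (Y := 3 / d * z) (by positivity) (by nlinarith)
        (by gcongr; linarith) (by nlinarith)) d
    rw [← mul_sub, mul_pow, ← Real.exp_nat_mul,
      show (d : ℝ) * (3 * (3 / d * z)) = 9 / 2 * z + 9 / 2 * z by linear_combination 3 * z * hsd,
      Real.exp_add, ← sq] at hexp
    have hc : (2 * (1 + 3 * x)) ^ 2 ≤ ((2 - 3 * x) * Real.exp (9 / 2 * z)) ^ 2 := by
      refine le_of_mul_le_mul_right ?_ (pow_pos hV d)
      have := mul_le_mul_of_nonneg_left hexp (sq_nonneg (2 - 3 * x))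
      linarith
    exact hpos.not_ge (abs_le_of_sq_le_sq' hc (mul_nonneg (by linarith) (Real.exp_pos _).le)).2
  · have hpos := upper_four_pos (x := x) (by linarith) (by linarith)
    have hA := hmono (1 / 3) (by linarith) (by linarith)
    have hE : ((1 + 3 / d * (1 / 3 : ℝ)) ^ 2) ^ d ≤ (27183 / 10000) ^ 2 := by
      rw [pow_right_comm]
      have h3 : (1 + 3 / d * (1 / 3 : ℝ)) ^ d ≤ Real.exp 1 := by
        calc _ ≤ Real.exp (3 / d * (1 / 3 : ℝ)) ^ d := by
              gcongr
              linarith [Real.add_one_le_exp (3 / d * (1 / 3 : ℝ))]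
          _ = _ := by
              rw [← Real.exp_nat_mul]
              congr 1
              linear_combination hsd / 3
      have h4 : Real.exp 1 ≤ 27183 / 10000 := by linarith [Real.exp_one_lt_d9]
      exact pow_le_pow_left₀ (by positivity) (h3.trans h4) 2
    have hV : (((1 - 3 / 4 * x) * (1 - 3 / 4 * (1 / 3 - x))) ^ 2) ^ 2 ≤
        ((1 - 3 / d * x) * (1 - 3 / d * (1 / 3 - x))) ^ d := by
      have h3 := one_add_pow_four_le hd4 (a := -(3 / 4 * x)) (by linarith)
      have h4 := one_add_pow_four_le hd4 (a := -(3 / 4 * (1 / 3 - x))) (by linarith)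
      rw [mul_neg, ← hs4, ← sub_eq_add_neg, ← sub_eq_add_neg] at h3 h4
      rw [← pow_mul, mul_pow, mul_pow]
      have : 0 ≤ 1 - 3 / 4 * x := by linarith
      exact mul_le_mul h3 h4 (pow_nonneg (by linarith) _) ((pow_nonneg this 4).trans h3)
    have hc : (2 * (1 + 3 * x) * ((1 - 3 / 4 * x) * (1 - 3 / 4 * (1 / 3 - x))) ^ 2) ^ 2 ≤
        ((2 - 3 * x) * (27183 / 10000)) ^ 2 := by
      have h3 := mul_le_mul_of_nonneg_left hV (by positivity : 0 ≤ 4 * (1 + 3 * x) ^ 2)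
      have h4 := mul_le_mul_of_nonneg_left hE (sq_nonneg (2 - 3 * x))
      rw [mul_pow, mul_pow (2 - 3 * x), mul_pow 2]
      linarith
    exact hpos.not_ge (abs_le_of_sq_le_sq' hc (mul_nonneg (by linarith) (by norm_num))).2

lemma lt_of_centred_lower {d : ℕ} (hd4 : 4 ≤ d) {x y : ℝ} (hx0 : 0 ≤ x) (hy0 : 0 ≤ y)
    (hy1 : y ≤ 1 / 3) (hge : 26 ≤ 81 * x + 159 * y)
    (hlo : (2 + 3 * y) * (1 - 3 / d * x) ^ d ≤
      (1 - 3 * y) * ((1 + 3 / d * y) ^ d + (1 - 3 / d * (y - x)) ^ d)) :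
    y < 49 / 5000 + 17 / 20 * x := by
  by_contra! hy
  have hd' : (4 : ℝ) ≤ d := by exact_mod_cast hd4
  have hs0 : (0 : ℝ) < 3 / d := by positivity
  have hs1 : (3 : ℝ) / d ≤ 3 / 4 := by gcongr
  have hs4 : ∀ z : ℝ, 3 / d * z = 4 / d * (3 / 4 * z) := fun z => by ring
  have hpos := lower_four_pos (y := y) (by linarith) (by linarith)
  have hx : x ≤ 20 / 17 * (y - 49 / 5000) := by linarith
  set z := 20 / 17 * (y - 49 / 5000) with hz
  have hyz : y ≤ z := by linarith
  have hz1 : z ≤ 2 / 5 := by linarith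
  have hB : (2 + 3 * y) * (1 - 3 / d * z) ^ d ≤
      (1 - 3 * y) * ((1 + 3 / d * y) ^ d + (1 + 3 / d * (z - y)) ^ d) := by
    have : 0 ≤ 1 - 3 / d * z := by nlinarith
    have : 0 ≤ 1 - 3 / d * (y - x) := by nlinarith
    have : 0 ≤ 1 - 3 * y := by linarith
    have h3 : 1 - 3 / d * (y - x) ≤ 1 + 3 / d * (z - y) := by nlinarith
    refine le_trans ?_ (hlo.trans ?_) <;> gcongr
  have h3 := pow_ratio_le hd4 (a := 3 / 4 * z) (b := 3 / 4 * y) (by linarith)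
    (by rw [abs_of_nonneg (by positivity)]; linarith)
  have h4 := pow_ratio_le hd4 (a := 3 / 4 * z) (b := 3 / 4 * (z - y)) (by linarith)
    (by rw [abs_of_nonneg (by linarith)]; linarith)
  rw [← hs4, ← hs4] at h3 h4
  have hZ : 0 < (1 - 3 / d * z) ^ d := pow_pos (by nlinarith) d
  have hZ4 : 0 ≤ (1 - 3 / 4 * z) ^ 4 := pow_nonneg (by linarith) 4
  have h5 := mul_le_mul_of_nonneg_right hB hZ4
  have h6 := mul_le_mul_of_nonneg_left (add_le_add h3 h4) (by linarith : 0 ≤ 1 - 3 * y)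
  have h7 := mul_lt_mul_of_pos_right hpos hZ
  linarith

lemma IsLimitBox.ratio_lt {d : ℕ} (hd : 3 ≤ d) {l u : ℝ}
    (h : IsLimitBox d (3 / (d + 1)) l u) : 27 * u < 53 * l := by
  by_contra! hge
  obtain ⟨x, rfl⟩ : ∃ x, u = 1 / 3 + x := ⟨u - 1 / 3, by ring⟩
  obtain ⟨y, rfl⟩ : ∃ y, l = 1 / 3 - y := ⟨1 / 3 - l, by ring⟩
  obtain ⟨hup, hlo⟩ := h.centred (by omega)
  obtain ⟨hl, hu, h1, h2, -, -⟩ := h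
  have hx0 : 0 ≤ x := by linarith
  have hy0 : 0 ≤ y := by linarith
  rcases hd.eq_or_lt with rfl | hd4
  · norm_num at hup hlo
    exact not_centred_three hx0 hy0 (by linarith) (by linarith) (by linarith) hup hlo
  · have h3 := lt_of_centred_upper hd4 hx0 hy0 (by linarith) (by linarith) (by linarith) hup
    have h4 := lt_of_centred_lower hd4 hx0 hy0 (by linarith) (by linarith) hlo
    linarith

/-- Bounds from the one-step recursion, for `q = 3` and an arbitrary colour `c`.
For `d = 2` and `β ∈ (0,1)`, the conditional root marginal eventually lies in
`[459/2000, 1107/2500]` for all boundary configurations.  For `d ≥ 3` and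
`β ∈ [1 - 3/(d+1), 1)`, there are sequences `L_n ≤ U_n` bounding the conditional
root marginal for all boundary configurations, with `U_n / L_n ≤ 53/27`. -/
theorem potts_one_step_bounds (c : Fin 3) :
    (∀ β : ℝ, 0 < β → β < 1 →
      ∃ n₀ : ℕ, ∀ n ≥ n₀, ∀ τ : (Fin n → Fin 2) → Fin 3,
        459 / 2000 ≤ condRootProb 3 2 n β τ c ∧
        condRootProb 3 2 n β τ c ≤ 1107 / 2500) ∧
    (∀ d : ℕ, 3 ≤ d → ∀ β : ℝ, 1 - 3 / ((d : ℝ) + 1) ≤ β → β < 1 →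
      ∃ L U : ℕ → ℝ, ∃ n₀ : ℕ, ∀ n ≥ n₀,
        (∀ τ : (Fin n → Fin d) → Fin 3,
          L n ≤ condRootProb 3 d n β τ c ∧ condRootProb 3 d n β τ c ≤ U n) ∧
        U n / L n ≤ 53 / 27) := by
  refine ⟨fun β hβ0 hβ1 => ?_, fun d hd β hβ hβ1 => ?_⟩
  · have ht0 : 0 < 1 - β := by linarith
    have ht1 : 1 - β < 1 := by linarith
    obtain ⟨l, u, hbox, hlim⟩ := exists_isLimitBox 2 ht0 ht1
    obtain ⟨hl, hu⟩ := (hbox.mono ht0 ht1 ht1.le le_rfl).bounds_two (hbox.upper_lt_one ht0 ht1)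
    obtain ⟨n₀, hn₀⟩ := hlim (min (l - 459 / 2000) (1107 / 2500 - u))
      (lt_min (by linarith) (by linarith))
    refine ⟨n₀, fun n hn τ => ?_⟩
    have h := hn₀ n hn _ (condRootProb_mem_reachable 2 hβ0 hβ1 n τ).1 c
    exact ⟨by linarith [h.1, min_le_left (l - 459 / 2000) (1107 / 2500 - u)],
      by linarith [h.2, min_le_right (l - 459 / 2000) (1107 / 2500 - u)]⟩
  · have hd' : (3 : ℝ) ≤ d := by exact_mod_cast hd
    have ht : 3 / ((d : ℝ) + 1) < 1 := (div_lt_one (by linarith)).2 (by linarith)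
    have ht0 : 0 < 1 - β := by linarith
    have ht1 : 1 - β < 1 := by linarith
    obtain ⟨l, u, hbox, hlim⟩ := exists_isLimitBox d ht0 ht1
    have hr := (hbox.mono ht0 ht1 (by linarith) ht.le).ratio_lt hd
    have hlu := hbox.lower_le_upper
    have hl := hbox.nonneg
    obtain ⟨n₀, hn₀⟩ := hlim ((53 * l - 27 * u) / 80) (by linarith)
    refine ⟨fun _ => l - (53 * l - 27 * u) / 80, fun _ => u + (53 * l - 27 * u) / 80, n₀,
      fun n hn => ⟨fun τ => hn₀ n hn _ (condRootProb_mem_reachable d (by linarith) hβ1 n τ).1 c, ?_⟩⟩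
    rw [div_le_div_iff₀ (by linarith [hbox.one_le]) (by norm_num)]
    linarith
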